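/- arXiv:1503.03521 — 3 statements merged into one kernel-verified Lean document; each statement's English description precedes it below -/
import Mathlib

section
/- Let A be a C*-algebra, M ⊆ A a C*-subalgebra, and S a collection of states of M such that: (i) every φ ∈ S has a unique extension to a state φ̃ of A; and (ii) whenever x ∈ A satisfies φ̃(a* x* x a) = 0 for every a ∈ A and every φ ∈ S, then x = 0. Then for any C*-algebra B, a *-homomorphism ρ : A → B is injective if and only if its restriction to M is injective. -/
/-!
Let `ρ` be injective, hence isometric, on `M`. A state `φ ∈ S` then transports to `ρ(M) ⊆ B`, and a
Hahn–Banach extension of it to the unitization of `B` is positive because it attains its norm at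
`1`. Pulling this extension back along `ρ` gives a state of `A` that extends `φ`, so by uniqueness
`φ̃` factors through `ρ`. Therefore, if `ρ x = 0`, then `φ̃ (a* x* x a) = 0` for all `a` and all
`φ ∈ S`, whence `x = 0`.
-/

open ComplexOrder

/-- A state on a (possibly non-unital) C*-algebra: a positive continuous linear
functional of norm one. -/
def IsState {A : Type*} [NonUnitalNormedRing A] [StarRing A] [NormedSpace ℂ A]
    (ψ : A →L[ℂ] ℂ) : Prop :=
  (∀ a : A, 0 ≤ ψ (star a * a)) ∧ ‖ψ‖ = 1

section PositiveFunctionals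

variable {A : Type*} [NonUnitalCStarAlgebra A]

theorem norm_apply_star_mul_sq_le {φ : A →ₗ[ℂ] ℂ} (hφ : ∀ a, 0 ≤ φ (star a * a)) (a b : A) :
    ‖φ (star a * b)‖ ^ 2 ≤ (φ (star a * a)).re * (φ (star b * b)).re := by
  let := CStarAlgebra.spectralOrder A
  have := CStarAlgebra.spectralOrderedRing A
  let f : A →ₚ[ℂ] ℂ := PositiveLinearMap.mk₀ φ fun x hx => by
    obtain ⟨y, rfl⟩ := CStarAlgebra.nonneg_iff_eq_star_mul_self.mp hx
    exact hφ y
  have gns_norm_sq (x : A) : ‖f.toPreGNS x‖ ^ 2 = (φ (star x * x)).re :=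
    Real.sq_sqrt (Complex.nonneg_iff.mp (hφ x)).1
  calc ‖φ (star a * b)‖ ^ 2 = ‖inner ℂ (f.toPreGNS a) (f.toPreGNS b)‖ ^ 2 := rfl
    _ ≤ (‖f.toPreGNS a‖ * ‖f.toPreGNS b‖) ^ 2 := by gcongr; exact norm_inner_le_norm _ _
    _ = (φ (star a * a)).re * (φ (star b * b)).re := by rw [mul_pow, gns_norm_sq, gns_norm_sq]

theorem norm_apply_sq_le {φ : A →L[ℂ] ℂ} (hφ : ∀ a, 0 ≤ φ (star a * a)) (a : A) :
    ‖φ a‖ ^ 2 ≤ ‖φ‖ * (φ (star a * a)).re := by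
  let := CStarAlgebra.spectralOrder A
  have := CStarAlgebra.spectralOrderedRing A
  have unit := CStarAlgebra.increasingApproximateUnit A
  have := unit.neBot
  have lim := ((φ.continuous.tendsto a).comp (unit.tendsto_mul_right a)).norm.pow 2
  refine le_of_tendsto lim ?_
  filter_upwards [unit.eventually_star_eq, unit.eventually_norm] with e he_star he_norm
  have hee : (φ (star e * e)).re ≤ ‖φ‖ := by
    refine (Complex.re_le_norm _).trans (φ.unit_le_opNorm _ ?_)
    rw [CStarRing.norm_star_mul_self]
    exact mul_le_one₀ he_norm (norm_nonneg e) he_norm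
  calc ‖φ (e * a)‖ ^ 2 = ‖φ (star e * a)‖ ^ 2 := by rw [he_star]
    _ ≤ (φ (star e * e)).re * (φ (star a * a)).re :=
      norm_apply_star_mul_sq_le (φ := φ.toLinearMap) hφ e a
    _ ≤ ‖φ‖ * (φ (star a * a)).re := by
      gcongr
      exact (Complex.nonneg_iff.mp (hφ a)).1

end PositiveFunctionals

section UnitalAlgebras

variable {U : Type*} [CStarAlgebra U] [PartialOrder U] [StarOrderedRing U]

theorem norm_algebraMap_sub_sq_le {a : U} {r s : ℝ} (hs : 0 ≤ s)
    (ha : star a * a ≤ r • (a + star a) + algebraMap ℝ U s) :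
    ‖algebraMap ℝ U r - a‖ ^ 2 ≤ r ^ 2 + s := by
  have expand : star (algebraMap ℝ U r - a) * (algebraMap ℝ U r - a) =
      algebraMap ℝ U (r ^ 2) - r • (a + star a) + star a * a := by
    simp only [Algebra.algebraMap_eq_smul_one, star_sub, star_smul, star_one, star_trivial,
      sub_mul, mul_sub, smul_mul_assoc, mul_smul_comm, one_mul, mul_one, sq]
    module
  rw [sq, ← CStarRing.norm_star_mul_self, expand,
    CStarAlgebra.norm_le_iff_le_algebraMap _ (by positivity) (expand ▸ star_mul_self_nonneg _)]
  calc algebraMap ℝ U (r ^ 2) - r • (a + star a) + star a * a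
      ≤ algebraMap ℝ U (r ^ 2) - r • (a + star a) + (r • (a + star a) + algebraMap ℝ U s) := by
        gcongr
    _ = algebraMap ℝ U (r ^ 2 + s) := by rw [map_add]; abel

theorem norm_one_sub_two_smul_le_one {a : U} (ha₀ : 0 ≤ a) (ha₁ : a ≤ 1) :
    ‖1 - (2 : ℝ) • a‖ ≤ 1 := by
  have hstar : star a = a := (IsSelfAdjoint.of_nonneg ha₀).star_eq
  have hsq : a * a ≤ a := by
    simpa [sq] using CStarAlgebra.pow_antitone ha₀ ha₁ one_le_two
  have hbound : star ((2 : ℝ) • a) * ((2 : ℝ) • a) ≤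
      (1 : ℝ) • ((2 : ℝ) • a + star ((2 : ℝ) • a)) + algebraMap ℝ U 0 :=
    calc star ((2 : ℝ) • a) * ((2 : ℝ) • a) = (4 : ℝ) • (a * a) := by
          simp only [star_smul, star_trivial, hstar, smul_mul_smul_comm]
          norm_num
      _ ≤ (4 : ℝ) • a := by gcongr
      _ = _ := by
          simp only [star_smul, star_trivial, hstar, map_zero]
          module
  simpa using norm_algebraMap_sub_sq_le le_rfl hbound

theorem two_mul_re_apply_star_mul_self_le (g : U →L[ℂ] ℂ) {e : U} (he : ‖e‖ ≤ 1) :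
    2 * (g (star e * e)).re ≤ (g 1).re + ‖g‖ := by
  have hle : star e * e ≤ 1 := by
    rw [← CStarAlgebra.norm_le_one_iff_of_nonneg _ (star_mul_self_nonneg e),
      CStarRing.norm_star_mul_self]
    exact mul_le_one₀ he (norm_nonneg e) he
  have hnorm : ‖g (1 - (2 : ℝ) • (star e * e))‖ ≤ ‖g‖ :=
    g.unit_le_opNorm _ (norm_one_sub_two_smul_le_one (star_mul_self_nonneg e) hle)
  have hre := (neg_le_abs _).trans ((Complex.abs_re_le_norm _).trans hnorm)
  rw [map_sub, g.map_smul_of_tower, Complex.sub_re, Complex.smul_re, smul_eq_mul] at hre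
  linarith

theorem apply_one_eq_norm_of_norm_le_re {g : U →L[ℂ] ℂ} (hg : ‖g‖ ≤ (g 1).re) :
    g 1 = ‖g‖ := by
  have hone : ‖g 1‖ ≤ ‖g‖ :=
    g.unit_le_opNorm _ ((CStarAlgebra.norm_le_one_iff_of_nonneg (1 : U)).mpr le_rfl)
  have hre : (g 1).re = ‖g 1‖ := le_antisymm (Complex.re_le_norm _) (hone.trans hg)
  rw [Complex.eq_re_of_ofReal_le (Complex.re_eq_norm.mp hre), le_antisymm (hre.le.trans hone) hg]

theorem neg_two_mul_re_apply_le {g : U →L[ℂ] ℂ} (hg : g 1 = ‖g‖) {a : U} (ha : 0 ≤ a + star a)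
    {r : ℝ} (hr : 0 ≤ r) : -(2 * r * ‖g‖ * (g a).re) ≤ ‖g‖ ^ 2 * ‖a‖ ^ 2 := by
  have hdist : ‖algebraMap ℝ U r - a‖ ^ 2 ≤ r ^ 2 + ‖a‖ ^ 2 :=
    norm_algebraMap_sub_sq_le (sq_nonneg _) <|
      CStarAlgebra.star_mul_le_algebraMap_norm_sq.trans (le_add_of_nonneg_left (smul_nonneg hr ha))
  have hre : (g (algebraMap ℝ U r - a)).re = r * ‖g‖ - (g a).re := by
    rw [map_sub, Algebra.algebraMap_eq_smul_one, g.map_smul_of_tower, hg]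
    simp
  have hsq : (r * ‖g‖ - (g a).re) ^ 2 ≤ ‖g‖ ^ 2 * (r ^ 2 + ‖a‖ ^ 2) :=
    calc (r * ‖g‖ - (g a).re) ^ 2 ≤ ‖g (algebraMap ℝ U r - a)‖ ^ 2 := by
          rw [← hre, ← sq_abs]
          gcongr
          exact Complex.abs_re_le_norm _
      _ ≤ (‖g‖ * ‖algebraMap ℝ U r - a‖) ^ 2 := by
          gcongr
          exact g.le_opNorm _
      _ ≤ ‖g‖ ^ 2 * (r ^ 2 + ‖a‖ ^ 2) := by
          rw [mul_pow]
          gcongr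
  linarith [sq_nonneg (g a).re]

-- `r` is arbitrarily large in `neg_two_mul_re_apply_le`: the half-plane `0 ≤ re z` is approximated
-- by the discs around `r` whose boundary circles pass close to `0`.
theorem re_apply_nonneg_of_apply_one_eq_norm {g : U →L[ℂ] ℂ} (hg : g 1 = ‖g‖) {a : U}
    (ha : 0 ≤ a + star a) : 0 ≤ (g a).re := by
  by_contra! hneg
  have hg_pos : 0 < ‖g‖ := norm_pos_iff.mpr fun h => by simp [h] at hneg
  obtain ⟨n, hn⟩ := exists_lt_nsmul (show 0 < -(2 * ‖g‖ * (g a).re) by nlinarith)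
    (‖g‖ ^ 2 * ‖a‖ ^ 2)
  have hle := neg_two_mul_re_apply_le hg ha n.cast_nonneg
  rw [nsmul_eq_mul] at hn
  linarith

theorem apply_nonneg_of_apply_one_eq_norm {g : U →L[ℂ] ℂ} (hg : g 1 = ‖g‖) {a : U}
    (ha : 0 ≤ a) : 0 ≤ g a := by
  have hstar : star a = a := (IsSelfAdjoint.of_nonneg ha).star_eq
  have hre : 0 ≤ (g a).re :=
    re_apply_nonneg_of_apply_one_eq_norm hg (by rw [hstar]; exact add_nonneg ha ha)
  have him_nonpos : 0 ≤ (g (Complex.I • a)).re :=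
    re_apply_nonneg_of_apply_one_eq_norm hg (by simp [hstar])
  have him_nonneg : 0 ≤ (g (-Complex.I • a)).re :=
    re_apply_nonneg_of_apply_one_eq_norm hg (by simp [hstar])
  simp only [map_smul, smul_eq_mul, neg_mul, Complex.neg_re, Complex.I_mul_re, neg_neg,
    Left.nonneg_neg_iff] at him_nonpos him_nonneg
  exact Complex.nonneg_iff.mpr ⟨hre, le_antisymm him_nonneg him_nonpos⟩

end UnitalAlgebras

section Extension

theorem exists_comp_linearIsometry_eq_norm_eq {𝕜 E F : Type*} [RCLike 𝕜]
    [NormedAddCommGroup E] [NormedSpace 𝕜 E] [NormedAddCommGroup F] [NormedSpace 𝕜 F]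
    (ι : E →ₗᵢ[𝕜] F) (φ : E →L[𝕜] 𝕜) :
    ∃ g : F →L[𝕜] 𝕜, g.comp ι.toContinuousLinearMap = φ ∧ ‖g‖ = ‖φ‖ := by
  obtain ⟨g, hg, hnorm⟩ := exists_extension_norm_eq (LinearMap.range ι.toLinearMap)
    (φ.comp (ι.equivRange.symm : _ →L[𝕜] E))
  refine ⟨g, ?_, hnorm.trans (φ.opNorm_comp_linearIsometryEquiv ι.equivRange.symm)⟩
  ext x
  simpa using hg (ι.equivRange x)

variable {A B C : Type*} [NonUnitalCStarAlgebra A] [NonUnitalCStarAlgebra B]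
  [NonUnitalCStarAlgebra C]

open scoped CStarAlgebra in
/-- The pullback `ψ ∘ ρ` of a bounded functional `ψ` along a *-homomorphism `ρ`, as a bounded
functional. -/
noncomputable def dualPullback (ρ : A →⋆ₙₐ[ℂ] B) (ψ : B →L[ℂ] ℂ) : A →L[ℂ] ℂ :=
  ψ.comp ⟨(ρ : A →ₗ[ℂ] B), map_continuous ρ⟩

@[simp]
theorem dualPullback_apply (ρ : A →⋆ₙₐ[ℂ] B) (ψ : B →L[ℂ] ℂ) (a : A) :
    dualPullback ρ ψ a = ψ (ρ a) :=
  rfl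

theorem norm_dualPullback_le (ρ : A →⋆ₙₐ[ℂ] B) (ψ : B →L[ℂ] ℂ) : ‖dualPullback ρ ψ‖ ≤ ‖ψ‖ :=
  ContinuousLinearMap.opNorm_le_bound _ (norm_nonneg ψ) fun a =>
    ψ.le_opNorm_of_le (NonUnitalStarAlgHom.norm_apply_le ρ a)

theorem dualPullback_star_mul_self_nonneg (ρ : A →⋆ₙₐ[ℂ] B) {ψ : B →L[ℂ] ℂ}
    (hψ : ∀ b, 0 ≤ ψ (star b * b)) (a : A) : 0 ≤ dualPullback ρ ψ (star a * a) := by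
  rw [dualPullback_apply, map_mul, map_star]
  exact hψ (ρ a)

theorem apply_one_eq_norm_of_dualPullback {U : Type*} [CStarAlgebra U] {σ : A →⋆ₙₐ[ℂ] U}
    {g : U →L[ℂ] ℂ} (hpos : ∀ a, 0 ≤ dualPullback σ g (star a * a))
    (hnorm : ‖dualPullback σ g‖ = ‖g‖) : g 1 = ‖g‖ := by
  let := CStarAlgebra.spectralOrder U
  have := CStarAlgebra.spectralOrderedRing U
  refine apply_one_eq_norm_of_norm_le_re ?_
  have bound (a : A) (ha : ‖a‖ < 1) : 2 * ‖g (σ a)‖ ^ 2 ≤ ‖g‖ * ((g 1).re + ‖g‖) := by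
    have hσa : ‖σ a‖ ≤ 1 := (NonUnitalStarAlgHom.norm_apply_le σ a).trans ha.le
    calc 2 * ‖g (σ a)‖ ^ 2 ≤ 2 * (‖g‖ * (g (star (σ a) * σ a)).re) := by
          simpa [hnorm, map_star] using norm_apply_sq_le hpos a
      _ = ‖g‖ * (2 * (g (star (σ a) * σ a)).re) := by ring
      _ ≤ ‖g‖ * ((g 1).re + ‖g‖) := by
          gcongr
          exact two_mul_re_apply_star_mul_self_le g hσa
  by_contra! hlt
  have hg_pos : 0 < ‖g‖ := norm_pos_iff.mpr fun h => by simp [h] at hlt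
  have hsqrt : √(‖g‖ * ((g 1).re + ‖g‖) / 2) < ‖dualPullback σ g‖ := by
    rw [hnorm, Real.sqrt_lt' hg_pos]
    nlinarith
  obtain ⟨a, ha, hlarge⟩ := (dualPullback σ g).exists_lt_apply_of_lt_opNorm hsqrt
  rw [dualPullback_apply, Real.sqrt_lt' ((Real.sqrt_nonneg _).trans_lt hlarge)] at hlarge
  linarith [bound a ha]

theorem exists_dualPullback_eq_nonneg_norm_eq {σ : A →⋆ₙₐ[ℂ] B} (hσ : Function.Injective σ)
    {φ : A →L[ℂ] ℂ} (hφ : ∀ a, 0 ≤ φ (star a * a)) :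
    ∃ ψ : B →L[ℂ] ℂ, dualPullback σ ψ = φ ∧ (∀ b, 0 ≤ ψ (star b * b)) ∧ ‖ψ‖ = ‖φ‖ := by
  let := CStarAlgebra.spectralOrder (Unitization ℂ B)
  have := CStarAlgebra.spectralOrderedRing (Unitization ℂ B)
  let inr := Unitization.inrNonUnitalStarAlgHom ℂ B
  let τ : A →⋆ₙₐ[ℂ] Unitization ℂ B := inr.comp σ
  have hτ : Function.Injective τ := Unitization.inr_injective.comp hσ
  obtain ⟨g, hg, hnorm⟩ := exists_comp_linearIsometry_eq_norm_eq
    ⟨(τ : A →ₗ[ℂ] Unitization ℂ B), NonUnitalStarAlgHom.norm_map τ hτ⟩ φ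
  have hgτ : dualPullback τ g = φ := hg
  have hone : g 1 = ‖g‖ :=
    apply_one_eq_norm_of_dualPullback (σ := τ) (hgτ ▸ hφ) (hgτ ▸ hnorm.symm)
  have hψ : dualPullback σ (dualPullback inr g) = φ := hgτ
  refine ⟨dualPullback inr g, hψ, dualPullback_star_mul_self_nonneg inr fun x =>
    apply_nonneg_of_apply_one_eq_norm hone (star_mul_self_nonneg x), le_antisymm ?_ ?_⟩
  · exact hnorm ▸ norm_dualPullback_le inr g
  · exact hψ ▸ norm_dualPullback_le σ (dualPullback inr g)

theorem IsState.of_dualPullback {σ : A →⋆ₙₐ[ℂ] B} {ρ : B →⋆ₙₐ[ℂ] C} {ψ : C →L[ℂ] ℂ}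
    (hψ : IsState ψ) (hσ : IsState (dualPullback (ρ.comp σ) ψ)) : IsState (dualPullback ρ ψ) :=
  ⟨dualPullback_star_mul_self_nonneg ρ hψ.1, le_antisymm (hψ.2 ▸ norm_dualPullback_le ρ ψ)
    (hσ.2 ▸ norm_dualPullback_le σ (dualPullback ρ ψ))⟩

theorem IsState.exists_dualPullback_extension_of_injOn {M : NonUnitalStarSubalgebra ℂ A}
    (hM : IsClosed (M : Set A)) {φ : M →L[ℂ] ℂ} (hφ : IsState φ) {ρ : A →⋆ₙₐ[ℂ] B}
    (hρ : Set.InjOn ρ M) :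
    ∃ ψ : B →L[ℂ] ℂ, IsState (dualPullback ρ ψ) ∧ ∀ m : M, ψ (ρ m) = φ m := by
  have := hM
  let ι := NonUnitalStarSubalgebraClass.subtype M
  have hinj : Function.Injective (ρ.comp ι) := fun x y h => Subtype.ext (hρ x.2 y.2 h)
  obtain ⟨ψ, hψ, hpos, hnorm⟩ := exists_dualPullback_eq_nonneg_norm_eq hinj hφ.1
  exact ⟨ψ, .of_dualPullback (σ := ι) ⟨hpos, hnorm.trans hφ.2⟩ (hψ ▸ hφ),
    fun m => DFunLike.congr_fun hψ m⟩

end Extension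

/-- Abstract uniqueness theorem: if every state in `S` has a unique extension to `A`
and the unique extensions jointly detect nonzero elements (faithfulness of the direct
sum of the associated GNS representations), then a *-homomorphism out of `A` is
injective iff it is injective on `M`. -/
theorem abstract_uniqueness {A B : Type*}
    [NonUnitalNormedRing A] [StarRing A] [CStarRing A] [NormedSpace ℂ A]
    [IsScalarTower ℂ A A] [SMulCommClass ℂ A A] [StarModule ℂ A] [CompleteSpace A]
    [NonUnitalNormedRing B] [StarRing B] [CStarRing B] [NormedSpace ℂ B]
    [IsScalarTower ℂ B B] [SMulCommClass ℂ B B] [StarModule ℂ B] [CompleteSpace B]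
    (M : NonUnitalStarSubalgebra ℂ A) (hM : IsClosed (M : Set A))
    (S : Set (M →L[ℂ] ℂ)) (hS : ∀ φ ∈ S, IsState φ)
    (hext : ∀ φ ∈ S, ∃! ψ : A →L[ℂ] ℂ, IsState ψ ∧ ∀ m : M, ψ (m : A) = φ m)
    (hfaith : ∀ x : A,
      (∀ φ ∈ S, ∀ ψ : A →L[ℂ] ℂ, (IsState ψ ∧ ∀ m : M, ψ (m : A) = φ m) →
        ∀ a : A, ψ (star a * star x * x * a) = 0) → x = 0)
    (ρ : A →⋆ₙₐ[ℂ] B) :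
    Function.Injective ρ ↔ Set.InjOn ρ (M : Set A) := by
  let : NonUnitalCStarAlgebra A := {}
  let : NonUnitalCStarAlgebra B := {}
  refine ⟨fun hinj => hinj.injOn, fun hinjOn => (injective_iff_map_eq_zero ρ).mpr fun x hx => ?_⟩
  refine hfaith x fun φ hφ ψ hψ a => ?_
  obtain ⟨ψ', hstate, hrestrict⟩ := (hS φ hφ).exists_dualPullback_extension_of_injOn hM hinjOn
  have hfactor : ψ = dualPullback ρ ψ' := (hext φ hφ).unique hψ ⟨hstate, hrestrict⟩
  simp [hfactor, hx]
end

section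
/- Let A be a C*-algebra, M ⊆ A a C*-subalgebra, and S a collection of states of M such that: (i) every φ ∈ S has a unique extension to a state φ̃ of A; and (ii) whenever x ∈ A satisfies φ̃(a* x* x a) = 0 for every a ∈ A and every φ ∈ S, then x = 0. Then every nonzero closed two-sided ideal J of A satisfies J ∩ M ≠ {0}. -/
/-!
Suppose a closed two-sided ideal `J` meets `M` only in zero. The self-adjoint part of `J` is again
a closed ideal, and `M` embeds isometrically into the quotient by it, so every state of `M` extends
to a state of `A` that vanishes on the self-adjoint part of `J`. By uniqueness, this is the
extension appearing in the faithfulness hypothesis, which therefore kills the self-adjoint part of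
`J`. Since it contains `star x * x` for every `x ∈ J`, the ideal `J` is zero.
-/

open ComplexOrder

section HahnBanach

variable {𝕜 E : Type*} [RCLike 𝕜] [SeminormedAddCommGroup E] [NormedSpace 𝕜 E]

theorem norm_le_norm_of_extends {p : Submodule 𝕜 E} {f : p →L[𝕜] 𝕜} {g : E →L[𝕜] 𝕜}
    (hfg : ∀ x : p, g x = f x) : ‖f‖ ≤ ‖g‖ :=
  f.opNorm_le_bound (norm_nonneg g) fun x => hfg x ▸ g.le_opNorm x

theorem exists_extension_norm_eq_vanishing_on {p q : Submodule 𝕜 E}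
    (hpq : ∀ x ∈ p, ∀ y ∈ q, ‖x‖ ≤ ‖x + y‖) (f : p →L[𝕜] 𝕜) :
    ∃ g : E →L[𝕜] 𝕜, (∀ x : p, g x = f x) ∧ (∀ y ∈ q, g y = 0) ∧ ‖g‖ = ‖f‖ := by
  -- Hahn–Banach for the seminorm `‖f‖ * dist(·, q)`
  let N : Seminorm 𝕜 E := ‖f‖₊ • (normSeminorm 𝕜 (E ⧸ q)).comp q.mkQ
  have hN : ∀ x, N x = ‖f‖ * ‖q.mkQ x‖ := fun _ => rfl
  have hN_cont : Continuous N := continuous_const.mul q.mkQL.continuous.norm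
  have norm_le_mkQ : ∀ x : p, ‖x‖ ≤ ‖q.mkQ (x : E)‖ := fun x =>
    QuotientAddGroup.le_norm_iff.2 fun z hz => by
      have hy : z - x ∈ q := (Submodule.Quotient.eq q).1 hz
      simpa using hpq x x.2 _ hy
  obtain ⟨g, hgf, hgN⟩ := Module.Dual.exists_continuous_extension_of_le_seminorm p f.toLinearMap
    hN_cont fun x => (f.le_opNorm x).trans
      (mul_le_mul_of_nonneg_left (norm_le_mkQ x) (norm_nonneg f))
  refine ⟨g, hgf, fun y hy => ?_, le_antisymm ?_ (norm_le_norm_of_extends hgf)⟩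
  · have hy0 : q.mkQ y = 0 := (Submodule.Quotient.mk_eq_zero q).2 hy
    simpa [hN, hy0] using hgN y
  · exact g.opNorm_le_bound (norm_nonneg f) fun x => (hgN x).trans
      (mul_le_mul_of_nonneg_left (Submodule.Quotient.norm_mk_le q x) (norm_nonneg f))

end HahnBanach

section HermitianPart

open WithConv

variable {A : Type*} [SeminormedAddCommGroup A] [StarAddMonoid A] [NormedStarGroup A]
  [NormedSpace ℂ A] [StarModule ℂ A]

/-- The hermitian part `a ↦ (ψ a + conj (ψ a⋆)) / 2` of a functional `ψ`. It turns an extension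
of a state whose values on positive elements only have nonnegative real part into a positive one. -/
noncomputable def hermitianPart (ψ : A →L[ℂ] ℂ) : A →L[ℂ] ℂ :=
  (2⁻¹ : ℂ) • (ψ + (star (toConv ψ)).ofConv)

theorem hermitianPart_apply (ψ : A →L[ℂ] ℂ) (a : A) :
    hermitianPart ψ a = 2⁻¹ * (ψ a + star (ψ (star a))) := rfl

theorem hermitianPart_apply_of_isSelfAdjoint (ψ : A →L[ℂ] ℂ) {a : A} (ha : IsSelfAdjoint a) :
    hermitianPart ψ a = (ψ a).re := by
  rw [hermitianPart_apply, ha.star_eq, Complex.star_def, Complex.add_conj]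
  push_cast
  ring

theorem norm_hermitianPart_le (ψ : A →L[ℂ] ℂ) : ‖hermitianPart ψ‖ ≤ ‖ψ‖ := by
  refine ContinuousLinearMap.opNorm_le_bound _ (norm_nonneg ψ) fun a => ?_
  calc ‖hermitianPart ψ a‖ ≤ 2⁻¹ * (‖ψ a‖ + ‖ψ (star a)‖) := by
        rw [hermitianPart_apply, norm_mul, norm_inv, Complex.norm_two]
        gcongr
        exact (norm_add_le _ _).trans_eq (by rw [norm_star])
    _ ≤ 2⁻¹ * (‖ψ‖ * ‖a‖ + ‖ψ‖ * ‖star a‖) := by gcongr <;> exact ψ.le_opNorm _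
    _ = ‖ψ‖ * ‖a‖ := by rw [norm_star]; ring

end HermitianPart

section StarIdeal

variable {R A : Type*} [CommSemiring R] [NonUnitalRing A] [StarRing A] [Module R A]

/-- A self-adjoint two-sided ideal, given as a submodule; closure under right multiplication
follows from the two fields. -/
structure IsStarIdeal (J : Submodule R A) : Prop where
  mul_mem_left : ∀ a : A, ∀ x ∈ J, a * x ∈ J
  star_mem : ∀ x ∈ J, star x ∈ J

theorem IsStarIdeal.mul_mem_right {J : Submodule R A} (hJ : IsStarIdeal J) (a : A) {x : A}
    (hx : x ∈ J) : x * a ∈ J := by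
  simpa using hJ.star_mem _ (hJ.mul_mem_left (star a) _ (hJ.star_mem _ hx))

/-- The pairs `(m, a)` with `m ∈ M` and `m ≡ a` modulo `J`: the fibre product of `M` and `A`
over `A ⧸ J`. -/
def congruencePairs (M : NonUnitalStarSubalgebra R A) {J : Submodule R A} (hJ : IsStarIdeal J) :
    NonUnitalStarSubalgebra R (A × A) where
  carrier := {p | p.1 ∈ M ∧ p.1 - p.2 ∈ J}
  add_mem' {p q} hp hq := ⟨add_mem hp.1 hq.1, by
    simpa [add_sub_add_comm] using J.add_mem hp.2 hq.2⟩
  zero_mem' := by simp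
  mul_mem' {p q} hp hq := ⟨mul_mem hp.1 hq.1, by
    have : p.1 * (q.1 - q.2) + (p.1 - p.2) * q.2 = (p * q).1 - (p * q).2 := by
      simp only [Prod.fst_mul, Prod.snd_mul]; noncomm_ring
    exact this ▸ J.add_mem (hJ.mul_mem_left _ _ hq.2) (hJ.mul_mem_right _ hp.2)⟩
  smul_mem' c p hp := ⟨M.smul_mem' c hp.1, by simpa [smul_sub] using J.smul_mem c hp.2⟩
  star_mem' {p} hp := ⟨star_mem hp.1, by simpa using hJ.star_mem _ hp.2⟩

theorem isClosed_congruencePairs [TopologicalSpace A] [ContinuousSub A]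
    {M : NonUnitalStarSubalgebra R A} (hM : IsClosed (M : Set A)) {J : Submodule R A}
    (hJc : IsClosed (J : Set A)) (hJ : IsStarIdeal J) :
    IsClosed (congruencePairs M hJ : Set (A × A)) :=
  (hM.preimage continuous_fst).inter (hJc.preimage (continuous_fst.sub continuous_snd))

variable [StarRing R] [StarModule R A]

/-- The self-adjoint part `J ∩ J⋆` of a subspace `J`. -/
def starCore (J : Submodule R A) : Submodule R A :=
  J ⊓ J.comap (starLinearEquiv R : A ≃ₗ⋆[R] A).toLinearMap

theorem mem_starCore {J : Submodule R A} {x : A} : x ∈ starCore J ↔ x ∈ J ∧ star x ∈ J := Iff.rfl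

theorem isStarIdeal_starCore {J : Submodule R A} (hJl : ∀ a : A, ∀ x ∈ J, a * x ∈ J)
    (hJr : ∀ a : A, ∀ x ∈ J, x * a ∈ J) : IsStarIdeal (starCore J) where
  mul_mem_left a x hx := ⟨hJl a x hx.1, by simpa using hJr (star a) _ hx.2⟩
  star_mem x hx := ⟨hx.2, by simpa using hx.1⟩

theorem isClosed_starCore [TopologicalSpace A] [ContinuousStar A] {J : Submodule R A}
    (hJ : IsClosed (J : Set A)) : IsClosed (starCore J : Set A) :=
  hJ.inter (hJ.preimage continuous_star)

theorem star_mul_self_mem_starCore {J : Submodule R A} (hJl : ∀ a : A, ∀ x ∈ J, a * x ∈ J)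
    {x : A} (hx : x ∈ J) : star x * x ∈ starCore J :=
  mem_starCore.2 ⟨hJl _ _ hx, by simpa using hJl (star x) x hx⟩

end StarIdeal

section CStarAlgebra

variable {A : Type*} [NonUnitalCStarAlgebra A]

theorem norm_le_norm_add_of_disjoint {M : NonUnitalStarSubalgebra ℂ A} (hM : IsClosed (M : Set A))
    {J : Submodule ℂ A} (hJc : IsClosed (J : Set A)) (hJ : IsStarIdeal J)
    (hMJ : Disjoint M.toSubmodule J) {m j : A} (hm : m ∈ M) (hj : j ∈ J) : ‖m‖ ≤ ‖m + j‖ := by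
  let C := congruencePairs M hJ
  have : IsClosed (C : Set (A × A)) := isClosed_congruencePairs hM hJc hJ
  let _ : NonUnitalCStarAlgebra C := NonUnitalStarSubalgebra.nonUnitalCStarAlgebra C
  let π : C →⋆ₙₐ[ℂ] A :=
    (NonUnitalStarAlgHom.snd ℂ A A).comp (NonUnitalStarSubalgebraClass.subtype C)
  have hπ : Function.Injective π := by
    refine (injective_iff_map_eq_zero π).2 ?_
    rintro ⟨⟨x, y⟩, hxM, hxJ⟩ (rfl : y = 0)
    have hx : x = 0 := Submodule.disjoint_def.1 hMJ x hxM (by simpa using hxJ)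
    exact Subtype.ext (Prod.ext hx rfl)
  -- an injective ⋆-homomorphism of C⋆-algebras is isometric
  have norm_pair : ‖m + j‖ = ‖(m, m + j)‖ :=
    NonUnitalStarAlgHom.norm_map π hπ ⟨(m, m + j), hm, by simpa using hj⟩
  exact norm_pair ▸ norm_fst_le (m, m + j)

theorem norm_le_of_neg_algebraMap_le_of_le_algebraMap {B : Type*} [CStarAlgebra B] [PartialOrder B]
    [StarOrderedRing B] {a : B} (ha : IsSelfAdjoint a) {r : ℝ} (hr : 0 ≤ r)
    (hl : -algebraMap ℝ B r ≤ a) (hu : a ≤ algebraMap ℝ B r) : ‖a‖ ≤ r := by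
  rw [← map_neg, algebraMap_le_iff_le_spectrum] at hl
  rw [le_algebraMap_iff_spectrum_le] at hu
  rw [← cfc_id' ℝ a]
  exact norm_cfc_le hr fun x hx => abs_le.2 ⟨hl x hx, hu x hx⟩

theorem norm_sub_le_max_of_nonneg [PartialOrder A] [StarOrderedRing A] {a b : A} (ha : 0 ≤ a)
    (hb : 0 ≤ b) : ‖a - b‖ ≤ max ‖a‖ ‖b‖ := by
  have ha' : 0 ≤ (a : Unitization ℂ A) := Unitization.inr_nonneg_iff.2 ha
  have hb' : 0 ≤ (b : Unitization ℂ A) := Unitization.inr_nonneg_iff.2 hb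
  have ha_le : (a : Unitization ℂ A) ≤ algebraMap ℝ _ (max ‖a‖ ‖b‖) :=
    (CStarAlgebra.norm_le_iff_le_algebraMap _ (by positivity) ha').1
      ((Unitization.norm_inr a).trans_le (le_max_left _ _))
  have hb_le : (b : Unitization ℂ A) ≤ algebraMap ℝ _ (max ‖a‖ ‖b‖) :=
    (CStarAlgebra.norm_le_iff_le_algebraMap _ (by positivity) hb').1
      ((Unitization.norm_inr b).trans_le (le_max_right _ _))
  rw [← Unitization.norm_inr (𝕜 := ℂ), Unitization.inr_sub]
  refine norm_le_of_neg_algebraMap_le_of_le_algebraMap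
    ((IsSelfAdjoint.of_nonneg ha').sub (.of_nonneg hb')) (by positivity) ?_
    ((sub_le_self _ hb').trans ha_le)
  calc -algebraMap ℝ _ (max ‖a‖ ‖b‖) ≤ -(b : Unitization ℂ A) := neg_le_neg hb_le
    _ ≤ a - b := by simpa only [sub_eq_neg_add] using le_add_of_nonneg_right ha'

/-- Positivity from an almost-norming positive contraction `u`: as `‖‖b‖ • u - b‖ ≤ ‖b‖`, the real
part of `ψ b` is at least `‖b‖ * (re (ψ u) - 1)`. -/
theorem re_apply_nonneg_of_exists_lt [PartialOrder A] [StarOrderedRing A] {ψ : A →L[ℂ] ℂ}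
    (hψ : ‖ψ‖ ≤ 1) (hu : ∀ c < 1, ∃ u : A, 0 ≤ u ∧ ‖u‖ ≤ 1 ∧ c < (ψ u).re) {b : A} (hb : 0 ≤ b) :
    0 ≤ (ψ b).re := by
  have lower_bound : ∀ c < 1, ‖b‖ * (c - 1) ≤ (ψ b).re := by
    intro c hc
    obtain ⟨u, hu0, hu1, hcu⟩ := hu c hc
    have norm_diff : ‖‖b‖ • u - b‖ ≤ ‖b‖ := by
      refine (norm_sub_le_max_of_nonneg (smul_nonneg (norm_nonneg b) hu0) hb).trans
        (max_le ?_ le_rfl)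
      rw [norm_smul, norm_norm]
      exact mul_le_of_le_one_right (norm_nonneg b) hu1
    have re_diff : ‖b‖ * (ψ u).re - (ψ b).re ≤ ‖b‖ := by
      calc ‖b‖ * (ψ u).re - (ψ b).re = (ψ (‖b‖ • u - b)).re := by
            simp [← Complex.coe_smul]
        _ ≤ ‖ψ (‖b‖ • u - b)‖ := Complex.re_le_norm _
        _ ≤ ‖b‖ := (ψ.le_of_opNorm_le hψ _).trans (by rwa [one_mul])
    nlinarith [norm_nonneg b]
  have tendsto_zero : Filter.Tendsto (fun c : ℝ => ‖b‖ * (c - 1)) (nhdsWithin 1 (Set.Iio 1))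
      (nhds 0) := by
    have : Continuous fun c : ℝ => ‖b‖ * (c - 1) := by fun_prop
    simpa using (this.tendsto 1).mono_left nhdsWithin_le_nhds
  exact le_of_tendsto tendsto_zero (Filter.eventually_of_mem self_mem_nhdsWithin lower_bound)

namespace IsState

variable {φ : A →L[ℂ] ℂ}

/-- A state as a positive linear map for a C⋆-algebra order, giving access to the
Gelfand–Naimark–Segal inner product. -/
def toPositiveLinearMap [PartialOrder A] [StarOrderedRing A] (hφ : IsState φ) : A →ₚ[ℂ] ℂ :=
  .mk₀ φ.toLinearMap fun x hx => by
    obtain ⟨a, rfl⟩ := CStarAlgebra.nonneg_iff_eq_star_mul_self.1 hx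
    exact hφ.1 a

theorem map_star (hφ : IsState φ) (a : A) : φ (star a) = star (φ a) := by
  let _ : PartialOrder A := CStarAlgebra.spectralOrder A
  have : StarOrderedRing A := CStarAlgebra.spectralOrderedRing A
  exact StarHomClass.map_star hφ.toPositiveLinearMap a

theorem norm_sq_apply_star_mul_le (hφ : IsState φ) (a b : A) :
    ‖φ (star a * b)‖ ^ 2 ≤ (φ (star a * a)).re * (φ (star b * b)).re := by
  let _ : PartialOrder A := CStarAlgebra.spectralOrder A
  have : StarOrderedRing A := CStarAlgebra.spectralOrderedRing A
  let f := hφ.toPositiveLinearMap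
  have := inner_mul_inner_self_le (𝕜 := ℂ) (f.toPreGNS a) (f.toPreGNS b)
  rw [norm_inner_symm (f.toPreGNS b), ← sq] at this
  exact this

theorem exists_lt_re_apply_star_mul_self (hφ : IsState φ) {c : ℝ} (hc : c < 1) :
    ∃ u : A, ‖u‖ ≤ 1 ∧ c < (φ (star u * u)).re := by
  let _ : PartialOrder A := CStarAlgebra.spectralOrder A
  have : StarOrderedRing A := CStarAlgebra.spectralOrderedRing A
  obtain ⟨m, hm1, hm⟩ := φ.exists_lt_apply_of_lt_opNorm
    (show √c < ‖φ‖ by rw [hφ.2]; exact (Real.sqrt_lt' one_pos).2 (by simpa using hc))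
  have approx := CStarAlgebra.increasingApproximateUnit A
  have tendsto_norm : Filter.Tendsto (fun u => ‖φ (u * m)‖) (CStarAlgebra.approximateUnit A)
      (nhds ‖φ m‖) :=
    ((φ.continuous.tendsto m).comp (approx.tendsto_mul_right m)).norm
  obtain ⟨u, hum, hu1, hu⟩ := ((tendsto_norm.eventually (lt_mem_nhds hm)).and
    (approx.eventually_norm.and approx.eventually_star_eq)).exists
  have hmm : (φ (star m * m)).re ≤ 1 := by
    calc (φ (star m * m)).re ≤ ‖φ (star m * m)‖ := Complex.re_le_norm _
      _ ≤ 1 * ‖star m * m‖ := φ.le_of_opNorm_le hφ.2.le _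
      _ ≤ 1 := by
        rw [one_mul, CStarRing.norm_star_mul_self]
        exact mul_le_one₀ hm1.le (norm_nonneg m) hm1.le
  refine ⟨u, hu1, ?_⟩
  calc c < ‖φ (u * m)‖ ^ 2 := Real.lt_sq_of_sqrt_lt hum
    _ ≤ (φ (star u * u)).re * (φ (star m * m)).re := by
      simpa only [hu] using hφ.norm_sq_apply_star_mul_le u m
    _ ≤ (φ (star u * u)).re :=
      mul_le_of_le_one_right (Complex.nonneg_iff.1 (hφ.1 u)).1 hmm

section Extension

variable {M : NonUnitalStarSubalgebra ℂ A} {φ : M →L[ℂ] ℂ} {ψ : A →L[ℂ] ℂ}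

theorem hermitianPart_apply_coe (hM : IsClosed (M : Set A)) (hφ : IsState φ)
    (hψφ : ∀ m : M, ψ m = φ m) (m : M) : hermitianPart ψ m = φ m := by
  have : IsClosed (M : Set A) := hM
  let _ : NonUnitalCStarAlgebra M := NonUnitalStarSubalgebra.nonUnitalCStarAlgebra M
  rw [hermitianPart_apply, hψφ, show ψ (star (m : A)) = φ (star m) from hψφ (star m),
    hφ.map_star, star_star]
  ring

theorem isState_hermitianPart (hM : IsClosed (M : Set A)) (hφ : IsState φ)
    (hψφ : ∀ m : M, ψ m = φ m) (hψ : ‖ψ‖ ≤ 1) : IsState (hermitianPart ψ) := by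
  have : IsClosed (M : Set A) := hM
  let _ : NonUnitalCStarAlgebra M := NonUnitalStarSubalgebra.nonUnitalCStarAlgebra M
  let _ : PartialOrder A := CStarAlgebra.spectralOrder A
  have : StarOrderedRing A := CStarAlgebra.spectralOrderedRing A
  have almost_norming : ∀ c < 1, ∃ u : A, 0 ≤ u ∧ ‖u‖ ≤ 1 ∧ c < (ψ u).re := by
    intro c hc
    obtain ⟨u, hu1, hcu⟩ := hφ.exists_lt_re_apply_star_mul_self hc
    refine ⟨(star u * u : M), star_mul_self_nonneg (u : A), ?_, by rwa [hψφ]⟩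
    exact (CStarRing.norm_star_mul_self (x := (u : A))).trans_le
      (mul_le_one₀ hu1 (norm_nonneg _) hu1)
  refine ⟨fun a => ?_, le_antisymm ((norm_hermitianPart_le ψ).trans hψ) ?_⟩
  · rw [hermitianPart_apply_of_isSelfAdjoint ψ (.star_mul_self a)]
    exact Complex.zero_le_real.2
      (re_apply_nonneg_of_exists_lt hψ almost_norming (star_mul_self_nonneg a))
  · exact hφ.2 ▸ norm_le_norm_of_extends (p := M.toSubmodule) (hφ.hermitianPart_apply_coe hM hψφ)

theorem exists_extension_vanishing_on (hφ : IsState φ) (hM : IsClosed (M : Set A))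
    {J : Submodule ℂ A} (hJc : IsClosed (J : Set A)) (hJ : IsStarIdeal J)
    (hMJ : Disjoint M.toSubmodule J) :
    ∃ ψ : A →L[ℂ] ℂ, (IsState ψ ∧ ∀ m : M, ψ m = φ m) ∧ ∀ x ∈ J, ψ x = 0 := by
  obtain ⟨ψ, hψφ, hψJ, hψ⟩ := exists_extension_norm_eq_vanishing_on
    (fun _ hm _ hj => norm_le_norm_add_of_disjoint hM hJc hJ hMJ hm hj)
    (show M.toSubmodule →L[ℂ] ℂ from φ)
  have hψ1 : ‖ψ‖ ≤ 1 := hψ.trans_le hφ.2.le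
  refine ⟨hermitianPart ψ, ⟨hφ.isState_hermitianPart hM hψφ hψ1,
    hφ.hermitianPart_apply_coe hM hψφ⟩, fun x hx => ?_⟩
  rw [hermitianPart_apply, hψJ x hx, hψJ _ (hJ.star_mem x hx), star_zero, add_zero, mul_zero]

end Extension

end IsState

end CStarAlgebra

/-- Ideal-theoretic form of the abstract uniqueness theorem: under the unique
state-extension and joint-faithfulness hypotheses, every nonzero closed two-sided
ideal of `A` meets `M` nontrivially. -/
theorem ideal_meets_subalgebra {A : Type*}
    [NonUnitalNormedRing A] [StarRing A] [CStarRing A] [NormedSpace ℂ A]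
    [IsScalarTower ℂ A A] [SMulCommClass ℂ A A] [StarModule ℂ A] [CompleteSpace A]
    (M : NonUnitalStarSubalgebra ℂ A) (hM : IsClosed (M : Set A))
    (S : Set (M →L[ℂ] ℂ)) (hS : ∀ φ ∈ S, IsState φ)
    (hext : ∀ φ ∈ S, ∃! ψ : A →L[ℂ] ℂ, IsState ψ ∧ ∀ m : M, ψ (m : A) = φ m)
    (hfaith : ∀ x : A,
      (∀ φ ∈ S, ∀ ψ : A →L[ℂ] ℂ, (IsState ψ ∧ ∀ m : M, ψ (m : A) = φ m) →
        ∀ a : A, ψ (star a * star x * x * a) = 0) → x = 0)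
    (J : Submodule ℂ A) (hJc : IsClosed (J : Set A))
    (hJl : ∀ a : A, ∀ x ∈ J, a * x ∈ J) (hJr : ∀ a : A, ∀ x ∈ J, x * a ∈ J)
    (hJne : J ≠ ⊥) :
    (J : Set A) ∩ (M : Set A) ≠ {0} := by
  intro hJM
  let _ : NonUnitalCStarAlgebra A := { }
  have hK : IsStarIdeal (starCore J) := isStarIdeal_starCore hJl hJr
  have hMK : Disjoint M.toSubmodule (starCore J) :=
    Submodule.disjoint_def.2 fun x hxM hxK => hJM.subset ⟨hxK.1, hxM⟩
  have starCore_eq_zero : ∀ x ∈ starCore J, x = 0 := by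
    intro x hx
    refine hfaith x fun φ hφ ψ hψ a => ?_
    obtain ⟨ψ', hψ', hψ'K⟩ :=
      (hS φ hφ).exists_extension_vanishing_on hM (isClosed_starCore hJc) hK hMK
    rw [(hext φ hφ).unique hψ hψ']
    exact hψ'K _ (hK.mul_mem_right a (hK.mul_mem_left _ x hx))
  refine hJne ((Submodule.eq_bot_iff J).2 fun x hx => ?_)
  exact (CStarRing.star_mul_self_eq_zero_iff x).1
    (starCore_eq_zero _ (star_mul_self_mem_starCore hJl hx))
end

section
/- Let A be a C*-algebra (not necessarily unital), M ⊆ A a C*-subalgebra, and φ a state of M. Suppose that for every a ∈ A and every ε > 0 there exist a positive element b ∈ M with ‖b‖ = φ(b) = 1 and an element c ∈ M with ‖b a b − c‖ < ε. Then φ has a unique extension to a state of A. -/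
open ComplexOrder

/-!
If a contractive functional `f` attains its norm at `e`, then `f` vanishes in every direction `x`
for which `‖e + z • x‖ ^ 2 = 1 + O(‖z‖ ^ 2)`. For a positive contraction `b` with `f b = 1`, the
operator convexity of `z ↦ star z * z` shows that `a - b * a` is such a direction, and taking
adjoints so is `a - a * b`; hence `f (b * a * b) = f a`. Two contractive extensions of `φ` therefore
agree at `a` up to the distance from `b * a * b` to `M`.

For existence, a Hahn-Banach extension of `φ` to `A` is extended once more to a contractive
functional `g` on the unitization. There `g 1 = g (b * 1) = 1`, and the directions `x` with
`star x = -x` at `e = 1` show that `g` is real on self-adjoint elements, hence positive.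
-/

section Functional

variable {𝕜 : Type*} [RCLike 𝕜]

lemma exists_extension_norm_eq_of_linearIsometry {E F : Type*} [NormedAddCommGroup E]
    [NormedSpace 𝕜 E] [NormedAddCommGroup F] [NormedSpace 𝕜 F] (ι : E →ₗᵢ[𝕜] F) (f : E →L[𝕜] 𝕜) :
    ∃ g : F →L[𝕜] 𝕜, (∀ x, g (ι x) = f x) ∧ ‖g‖ = ‖f‖ := by
  let e : E ≃ₗᵢ[𝕜] LinearMap.range ι.toLinearMap := ι.equivRange
  obtain ⟨g, hg, hgf⟩ := exists_extension_norm_eq _ (f ∘L (e.symm.toContinuousLinearEquiv :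
    LinearMap.range ι.toLinearMap →L[𝕜] E))
  refine ⟨g, fun x ↦ ?_, ?_⟩
  · simpa [e] using hg (e x)
  · rw [hgf]
    exact f.opNorm_comp_linearIsometryEquiv e.symm

variable {E : Type*} [SeminormedAddCommGroup E] [NormedSpace 𝕜 E]

lemma re_apply_eq_zero_of_norm_add_smul_sq_le {f : E →L[𝕜] 𝕜} (hf : ‖f‖ ≤ 1) {e x : E}
    (he : f e = 1) {C : ℝ} (h : ∀ t : ℝ, ‖e + (t : 𝕜) • x‖ ^ 2 ≤ 1 + t ^ 2 * C) :
    RCLike.re (f x) = 0 := by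
  have quadratic_nonneg (t : ℝ) : 0 ≤ C * (t * t) + -2 * RCLike.re (f x) * t + 0 := by
    have re_le : 1 + t * RCLike.re (f x) ≤ ‖e + (t : 𝕜) • x‖ := calc
      1 + t * RCLike.re (f x) = RCLike.re (f (e + (t : 𝕜) • x)) := by simp [he]
      _ ≤ ‖f (e + (t : 𝕜) • x)‖ := RCLike.re_le_norm _
      _ ≤ ‖e + (t : 𝕜) • x‖ := f.le_of_opNorm_le_of_le hf le_rfl |>.trans_eq (one_mul _)
    nlinarith [h t, sq_nonneg (‖e + (t : 𝕜) • x‖ - 1)]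
  have discrim_le := discrim_le_zero quadratic_nonneg
  rw [discrim] at discrim_le
  nlinarith

lemma apply_eq_zero_of_norm_add_smul_sq_le {f : E →L[𝕜] 𝕜} (hf : ‖f‖ ≤ 1) {e x : E}
    (he : f e = 1) {C : ℝ} (h : ∀ z : 𝕜, ‖e + z • x‖ ^ 2 ≤ 1 + ‖z‖ ^ 2 * C) : f x = 0 := by
  have re_eq_zero := re_apply_eq_zero_of_norm_add_smul_sq_le hf he (x := star (f x) • x)
    (C := ‖f x‖ ^ 2 * C) fun t ↦ by
      simpa [smul_smul, mul_pow, mul_assoc] using h (t * star (f x))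
  rw [map_smul, smul_eq_mul, RCLike.star_def, RCLike.conj_mul, ← RCLike.ofReal_pow,
    RCLike.ofReal_re] at re_eq_zero
  exact norm_eq_zero.1 (pow_eq_zero_iff two_ne_zero |>.1 re_eq_zero)

end Functional

section Unital

variable {B : Type*} [CStarAlgebra B]

lemma norm_sq_le_one_add_norm_sq_of_star_mul_self_le [PartialOrder B] [StarOrderedRing B]
    {z y : B} (h : star z * z ≤ 1 + star y * y) : ‖z‖ ^ 2 ≤ 1 + ‖y‖ ^ 2 := by
  rw [sq ‖z‖, ← CStarRing.norm_star_mul_self,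
    CStarAlgebra.norm_le_iff_le_algebraMap _ (by positivity) (star_mul_self_nonneg z), map_add,
    map_one]
  exact h.trans <| add_le_add_right CStarAlgebra.star_mul_le_algebraMap_norm_sq 1

lemma norm_one_add_sq_le_of_mem_skewAdjoint {x : B} (hx : x ∈ skewAdjoint B) :
    ‖1 + x‖ ^ 2 ≤ 1 + ‖x‖ ^ 2 := by
  let := CStarAlgebra.spectralOrder B
  have := CStarAlgebra.spectralOrderedRing B
  refine norm_sq_le_one_add_norm_sq_of_star_mul_self_le (le_of_eq ?_)
  rw [star_add, star_one, skewAdjoint.mem_iff.1 hx]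
  noncomm_ring

lemma im_apply_eq_zero_of_isSelfAdjoint {f : B →L[ℂ] ℂ} (hf : ‖f‖ ≤ 1) (hf_one : f 1 = 1) {a : B}
    (ha : IsSelfAdjoint a) : (f a).im = 0 := by
  have skew (t : ℝ) : (t : ℂ) • Complex.I • a ∈ skewAdjoint B := by
    simp [skewAdjoint.mem_iff, ha.star_eq]
  have re_eq_zero := re_apply_eq_zero_of_norm_add_smul_sq_le hf hf_one (x := Complex.I • a)
    (C := ‖a‖ ^ 2) fun t ↦ by
      simpa [norm_smul, mul_pow] using norm_one_add_sq_le_of_mem_skewAdjoint (skew t)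
  simpa using re_eq_zero

variable [PartialOrder B] [StarOrderedRing B]

lemma norm_add_one_sub_mul_sq_le {b : B} (hb : 0 ≤ b) (hb' : ‖b‖ ≤ 1) (y : B) :
    ‖b + (1 - b) * y‖ ^ 2 ≤ 1 + ‖y‖ ^ 2 := by
  have b_le_one : b ≤ 1 := (CStarAlgebra.norm_le_one_iff_of_nonneg b).1 hb'
  have sq_le : b * b ≤ b := by
    simpa [sq] using CStarAlgebra.pow_antitone hb b_le_one one_le_two
  -- `star (1 - y) * (b - b * b) * (1 - y)` is the defect in the operator convexity of
  -- `z ↦ star z * z` at the convex combination `b * 1 + (1 - b) * y`.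
  have decomposition : 1 + star y * y = star (b + (1 - b) * y) * (b + (1 - b) * y) +
      (star (1 - y) * (b - b * b) * (1 - y) + (1 - b) + star y * b * y) := by
    simp only [star_add, star_mul, star_sub, star_one, hb.star_eq]
    noncomm_ring
  refine norm_sq_le_one_add_norm_sq_of_star_mul_self_le ?_
  rw [decomposition]
  exact le_add_of_nonneg_right <| add_nonneg
    (add_nonneg (star_left_conjugate_nonneg (sub_nonneg.2 sq_le) _) (sub_nonneg.2 b_le_one))
    (star_left_conjugate_nonneg hb y)

lemma norm_algebraMap_norm_sub_le {a : B} (ha : 0 ≤ a) : ‖algebraMap ℝ B ‖a‖ - a‖ ≤ ‖a‖ := by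
  rw [CStarAlgebra.norm_le_iff_le_algebraMap _ (norm_nonneg a)
    (sub_nonneg.2 IsSelfAdjoint.le_algebraMap_norm_self)]
  exact sub_le_self _ ha

lemma apply_nonneg_of_norm_le_one_of_apply_one {f : B →L[ℂ] ℂ} (hf : ‖f‖ ≤ 1)
    (hf_one : f 1 = 1) {a : B} (ha : 0 ≤ a) : 0 ≤ f a := by
  refine Complex.nonneg_iff.2
    ⟨?_, (im_apply_eq_zero_of_isSelfAdjoint hf hf_one (.of_nonneg ha)).symm⟩
  have apply_norm : f (algebraMap ℝ B ‖a‖) = ‖a‖ := by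
    rw [Algebra.algebraMap_eq_smul_one, ← Complex.coe_smul, map_smul, hf_one, smul_eq_mul,
      mul_one]
  have norm_sub_re_le : ‖a‖ - (f a).re ≤ ‖a‖ := calc
    ‖a‖ - (f a).re = (f (algebraMap ℝ B ‖a‖ - a)).re := by simp [apply_norm]
    _ ≤ ‖f (algebraMap ℝ B ‖a‖ - a)‖ := Complex.re_le_norm _
    _ ≤ 1 * ‖a‖ := f.le_of_opNorm_le_of_le hf (norm_algebraMap_norm_sub_le ha)
    _ = ‖a‖ := one_mul _
  linarith

end Unital

section NonUnital

variable {A : Type*} [NonUnitalCStarAlgebra A] [PartialOrder A] [StarOrderedRing A]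

lemma norm_add_sub_mul_sq_le {b : A} (hb : 0 ≤ b) (hb' : ‖b‖ ≤ 1) (y : A) :
    ‖b + (y - b * y)‖ ^ 2 ≤ 1 + ‖y‖ ^ 2 := by
  have unitization_le := norm_add_one_sub_mul_sq_le (Unitization.inr_nonneg_iff.2 hb)
    (Unitization.norm_inr (𝕜 := ℂ) b ▸ hb') (y : Unitization ℂ A)
  rwa [sub_mul, one_mul, ← Unitization.inr_mul, ← Unitization.inr_sub, ← Unitization.inr_add,
    Unitization.norm_inr, Unitization.norm_inr] at unitization_le

lemma norm_add_sub_mul_sq_le' {b : A} (hb : 0 ≤ b) (hb' : ‖b‖ ≤ 1) (y : A) :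
    ‖b + (y - y * b)‖ ^ 2 ≤ 1 + ‖y‖ ^ 2 := by
  simpa [← norm_star (b + (y - y * b)), hb.star_eq] using norm_add_sub_mul_sq_le hb hb' (star y)

section ApplyEqOne

variable {f : A →L[ℂ] ℂ} (hf : ‖f‖ ≤ 1) {b : A} (hb : 0 ≤ b) (hb' : ‖b‖ ≤ 1) (hfb : f b = 1)

include hf hb hb' hfb

lemma apply_mul_left_eq_of_apply_eq_one (a : A) : f (b * a) = f a := by
  have apply_sub : f (a - b * a) = 0 :=
    apply_eq_zero_of_norm_add_smul_sq_le hf hfb (C := ‖a‖ ^ 2) fun z ↦ by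
      simpa [smul_sub, norm_smul, mul_pow, mul_smul_comm] using
        norm_add_sub_mul_sq_le hb hb' (z • a)
  rw [map_sub, sub_eq_zero] at apply_sub
  exact apply_sub.symm

lemma apply_mul_right_eq_of_apply_eq_one (a : A) : f (a * b) = f a := by
  have apply_sub : f (a - a * b) = 0 :=
    apply_eq_zero_of_norm_add_smul_sq_le hf hfb (C := ‖a‖ ^ 2) fun z ↦ by
      simpa [smul_sub, norm_smul, mul_pow, smul_mul_assoc] using
        norm_add_sub_mul_sq_le' hb hb' (z • a)
  rw [map_sub, sub_eq_zero] at apply_sub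
  exact apply_sub.symm

lemma apply_mul_mul_eq_of_apply_eq_one (a : A) : f (b * a * b) = f a := by
  rw [apply_mul_right_eq_of_apply_eq_one hf hb hb' hfb,
    apply_mul_left_eq_of_apply_eq_one hf hb hb' hfb]

lemma apply_nonneg_of_apply_eq_one {a : A} (ha : 0 ≤ a) : 0 ≤ f a := by
  let ι : A →ₗᵢ[ℂ] Unitization ℂ A := ⟨Unitization.inrHom ℂ ℂ A, Unitization.norm_inr⟩
  obtain ⟨g, hg, norm_g⟩ := exists_extension_norm_eq_of_linearIsometry ι f
  have norm_g_le : ‖g‖ ≤ 1 := norm_g.trans_le hf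
  have g_one : g 1 = 1 := by
    rw [← apply_mul_left_eq_of_apply_eq_one norm_g_le (Unitization.inr_nonneg_iff.2 hb)
      ((Unitization.norm_inr b).trans_le hb') ((hg b).trans hfb) 1, mul_one]
    exact (hg b).trans hfb
  rw [← hg a]
  exact apply_nonneg_of_norm_le_one_of_apply_one norm_g_le g_one (Unitization.inr_nonneg_iff.2 ha)

end ApplyEqOne

lemma eq_of_forall_exists_compression {ψ₁ ψ₂ : A →L[ℂ] ℂ} (h₁ : ‖ψ₁‖ ≤ 1) (h₂ : ‖ψ₂‖ ≤ 1)
    (h : ∀ a : A, ∀ ε > (0 : ℝ), ∃ b : A, 0 ≤ b ∧ ‖b‖ ≤ 1 ∧ ψ₁ b = 1 ∧ ψ₂ b = 1 ∧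
      ∃ c : A, ψ₁ c = ψ₂ c ∧ ‖b * a * b - c‖ < ε) : ψ₁ = ψ₂ := by
  ext a
  refine eq_of_forall_dist_le fun ε hε ↦ ?_
  obtain ⟨b, hb, hb', hb₁, hb₂, c, hc, norm_lt⟩ := h a (ε / 2) (half_pos hε)
  calc dist (ψ₁ a) (ψ₂ a)
    _ = ‖ψ₁ (b * a * b - c) - ψ₂ (b * a * b - c)‖ := by
      simp [dist_eq_norm, hc, apply_mul_mul_eq_of_apply_eq_one h₁ hb hb' hb₁,
        apply_mul_mul_eq_of_apply_eq_one h₂ hb hb' hb₂]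
    _ ≤ 1 * (ε / 2) + 1 * (ε / 2) := norm_sub_le_of_le
      (ψ₁.le_of_opNorm_le_of_le h₁ norm_lt.le) (ψ₂.le_of_opNorm_le_of_le h₂ norm_lt.le)
    _ = ε := by ring

end NonUnital

theorem compression_unique_extension_general {A : Type*} [NonUnitalCStarAlgebra A]
    (M : Submodule ℂ A) (φ : M →L[ℂ] ℂ) (hφ : ‖φ‖ = 1)
    (h : ∀ a : A, ∀ ε > (0 : ℝ), ∃ b : M,
      (∃ c : A, (b : A) = star c * c) ∧ ‖(b : A)‖ = 1 ∧ φ b = 1 ∧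
      ∃ c' : M, ‖(b : A) * a * (b : A) - (c' : A)‖ < ε) :
    ∃! ψ : A →L[ℂ] ℂ, IsState ψ ∧ ∀ m : M, ψ (m : A) = φ m := by
  let := CStarAlgebra.spectralOrder A
  have := CStarAlgebra.spectralOrderedRing A
  have nonneg_of_eq {b : A} : (∃ c, b = star c * c) → 0 ≤ b := by
    rintro ⟨c, rfl⟩
    exact star_mul_self_nonneg c
  obtain ⟨ψ, hψ, norm_ψ⟩ := exists_extension_norm_eq M φ
  rw [hφ] at norm_ψ
  refine ⟨ψ, ⟨⟨fun a ↦ ?_, norm_ψ⟩, hψ⟩, ?_⟩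
  · obtain ⟨b, hb, norm_b, hφb, -⟩ := h 0 1 one_pos
    exact apply_nonneg_of_apply_eq_one norm_ψ.le (nonneg_of_eq hb) norm_b.le ((hψ b).trans hφb)
      (star_mul_self_nonneg a)
  · rintro ψ' ⟨⟨-, norm_ψ'⟩, hψ'⟩
    refine eq_of_forall_exists_compression norm_ψ'.le norm_ψ.le fun a ε hε ↦ ?_
    obtain ⟨b, hb, norm_b, hφb, c, hc⟩ := h a ε hε
    exact ⟨b, nonneg_of_eq hb, norm_b.le, (hψ' b).trans hφb, (hψ b).trans hφb, c,
      (hψ' c).trans (hψ c).symm, hc⟩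

/-- Anderson's compression criterion (non-unital version): if every element of `A`
can be compressed by norm-one positive elements of `M` on which `φ` is `1` to be
arbitrarily close to `M`, then `φ` has a unique state extension to `A`. -/
theorem compression_unique_extension {A : Type*}
    [NonUnitalNormedRing A] [StarRing A] [CStarRing A] [NormedSpace ℂ A]
    [IsScalarTower ℂ A A] [SMulCommClass ℂ A A] [StarModule ℂ A] [CompleteSpace A]
    (M : NonUnitalStarSubalgebra ℂ A) (hM : IsClosed (M : Set A))
    (φ : M →L[ℂ] ℂ) (hφ : IsState φ)
    (h : ∀ a : A, ∀ ε > (0 : ℝ), ∃ b : M,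
      (∃ c : A, (b : A) = star c * c) ∧ ‖(b : A)‖ = 1 ∧ φ b = 1 ∧
      ∃ c' : M, ‖(b : A) * a * (b : A) - (c' : A)‖ < ε) :
    ∃! ψ : A →L[ℂ] ℂ, IsState ψ ∧ ∀ m : M, ψ (m : A) = φ m := by
  let : NonUnitalCStarAlgebra A := {}
  exact compression_unique_extension_general M.toSubmodule φ hφ.2 h
end
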